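/- arXiv:1906.01171 — 3 statements merged into one kernel-verified Lean document; each statement's English description precedes it below -/
import Mathlib

section
/- Let d ≥ 1, Δ > 0 and λ₁ ∈ (0,1). Then Q₀ is absolutely continuous with respect to P₀ and the Kullback–Leibler divergence satisfies KL(Q₀ ‖ P₀) = −log(λ₁(1+Δ)^d)/(1+Δ)^d + ((1+Δ)^d − 1)/(1+Δ)^d · log( ((1+Δ)^d − 1) / ((1−λ₁)(1+Δ)^d) ). -/
open MeasureTheory ProbabilityTheory
open scoped ENNReal

noncomputable section

/-- The closed annulus `{x : a ≤ ‖x‖ ≤ b}` in `ℝ^d` (Euclidean norm). -/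
def annulus (d : ℕ) (a b : ℝ) : Set (EuclideanSpace ℝ (Fin d)) :=
  {x | a ≤ ‖x‖ ∧ ‖x‖ ≤ b}

/-- The uniform probability measure on the annulus `A_d(a,b)`:
Lebesgue measure restricted to the annulus and normalized. -/
def U (d : ℕ) (a b : ℝ) : Measure (EuclideanSpace ℝ (Fin d)) :=
  (volume (annulus d a b))⁻¹ • volume.restrict (annulus d a b)

/-- `C_d`, the Lebesgue volume of the unit ball in `ℝ^d`. -/
def Cd (d : ℕ) : ℝ :=
  (volume (Metric.closedBall (0 : EuclideanSpace ℝ (Fin d)) 1)).toReal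

open Classical in
/-- Kullback–Leibler divergence: `∫ log (dμ/dν) dμ` if `μ ≪ ν`, and `+∞` otherwise. -/
def klDiv {X : Type*} [MeasurableSpace X] (μ ν : Measure X) : EReal :=
  if μ ≪ ν then ((∫ x, Real.log (μ.rnDeriv ν x).toReal ∂μ : ℝ) : EReal) else ⊤

/-- `P₀ = λ₁·U_d(0,1) + (1−λ₁)·U_d(1,1+Δ)`. -/
def P0 (d : ℕ) (Δ l1 : ℝ) : Measure (EuclideanSpace ℝ (Fin d)) :=
  ENNReal.ofReal l1 • U d 0 1 + ENNReal.ofReal (1 - l1) • U d 1 (1 + Δ)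

/-- `P₁ = λ₂·U_d(0,1) + (1−λ₂)·U_d(2,3)`. -/
def P1 (d : ℕ) (l2 : ℝ) : Measure (EuclideanSpace ℝ (Fin d)) :=
  ENNReal.ofReal l2 • U d 0 1 + ENNReal.ofReal (1 - l2) • U d 2 3

/-- `Q₀ = U_d(0,1+Δ)`. -/
def Q0 (d : ℕ) (Δ : ℝ) : Measure (EuclideanSpace ℝ (Fin d)) :=
  U d 0 (1 + Δ)

/-- Joint measure on `ℝ^d × {0,1}` with uniform class prior. -/
def joint (d : ℕ) (μ0 μ1 : Measure (EuclideanSpace ℝ (Fin d))) :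
    Measure (EuclideanSpace ℝ (Fin d) × Fin 2) :=
  (1/2 : ℝ≥0∞) • μ0.map (fun x => (x, 0)) + (1/2 : ℝ≥0∞) • μ1.map (fun x => (x, 1))

/-- Real-valued density of `μ` with respect to Lebesgue measure. -/
def f (d : ℕ) (μ : Measure (EuclideanSpace ℝ (Fin d))) (x : EuclideanSpace ℝ (Fin d)) : ℝ :=
  (μ.rnDeriv volume x).toReal

theorem measurableSet_annulus (d : ℕ) (a b : ℝ) : MeasurableSet (annulus d a b) :=
  (measurableSet_le measurable_const measurable_norm).inter
    (measurableSet_le measurable_norm measurable_const)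

theorem annulus_eq_closedBall_diff_ball (d : ℕ) (a b : ℝ) :
    annulus d a b = Metric.closedBall 0 b \ Metric.ball 0 a := by
  ext x
  simp [annulus, and_comm]

theorem annulus_union_annulus (d : ℕ) {a b c : ℝ} (hab : a ≤ b) (hbc : b ≤ c) :
    annulus d a b ∪ annulus d b c = annulus d a c := by
  ext x
  simp only [annulus, Set.mem_union, Set.mem_ofPred_eq]
  grind

theorem volume_annulus {d : ℕ} (hd : 1 ≤ d) {a b : ℝ} (ha : 0 ≤ a) (hab : a ≤ b) :
    volume (annulus d a b) = ENNReal.ofReal (b ^ d - a ^ d) *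
      volume (Metric.ball (0 : EuclideanSpace ℝ (Fin d)) 1) := by
  have : Nonempty (Fin d) := ⟨⟨0, hd⟩⟩
  have hball : volume (Metric.ball (0 : EuclideanSpace ℝ (Fin d)) 1) ≠ ∞ :=
    measure_ball_lt_top.ne
  rw [annulus_eq_closedBall_diff_ball, measure_sdiff
    (Metric.ball_subset_closedBall.trans (Metric.closedBall_subset_closedBall hab))
    measurableSet_ball.nullMeasurableSet measure_ball_lt_top.ne,
    Measure.addHaar_closedBall _ _ (ha.trans hab), Measure.addHaar_ball _ _ ha,
    finrank_euclideanSpace_fin, ENNReal.ofReal_sub _ (by positivity),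
    ENNReal.sub_mul fun _ _ => hball]

theorem aedisjoint_annulus {d : ℕ} (hd : 1 ≤ d) (a b c : ℝ) :
    AEDisjoint volume (annulus d a b) (annulus d b c) := by
  have : Nonempty (Fin d) := ⟨⟨0, hd⟩⟩
  refine measure_mono_null (fun x hx => ?_)
    (Measure.addHaar_sphere volume (0 : EuclideanSpace ℝ (Fin d)) b)
  rw [mem_sphere_zero_iff_norm]
  exact le_antisymm hx.1.2 hx.2.1

theorem isProbabilityMeasure_U {d : ℕ} {a b : ℝ} (h0 : volume (annulus d a b) ≠ 0)
    (htop : volume (annulus d a b) ≠ ∞) : IsProbabilityMeasure (U d a b) :=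
  ⟨by simp [U, ENNReal.inv_mul_cancel h0 htop]⟩

/-- The annulus `A_d(a,c)` split at radius `b`: the uniform measure on it is the mixture of the
uniform measures on the two pieces, weighted by their relative volumes. -/
theorem U_eq_smul_add_smul {d : ℕ} (hd : 1 ≤ d) {a b c : ℝ} (ha : 0 ≤ a) (hab : a < b)
    (hbc : b < c) :
    U d a c = ENNReal.ofReal ((b ^ d - a ^ d) / (c ^ d - a ^ d)) • U d a b +
      ENNReal.ofReal ((c ^ d - b ^ d) / (c ^ d - a ^ d)) • U d b c := by
  have hd' : d ≠ 0 := by omega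
  have hb : 0 ≤ b := ha.trans hab.le
  have hV0 : volume (Metric.ball (0 : EuclideanSpace ℝ (Fin d)) 1) ≠ 0 :=
    (Metric.measure_ball_pos _ _ one_pos).ne'
  have hVt : volume (Metric.ball (0 : EuclideanSpace ℝ (Fin d)) 1) ≠ ∞ :=
    measure_ball_lt_top.ne
  have hpab : 0 < b ^ d - a ^ d := sub_pos.2 (pow_lt_pow_left₀ hab ha hd')
  have hpbc : 0 < c ^ d - b ^ d := sub_pos.2 (pow_lt_pow_left₀ hbc hb hd')
  have hpac : 0 < c ^ d - a ^ d := by linarith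
  have weight : ∀ {p q : ℝ} {V : ℝ≥0∞}, 0 < p → 0 < q → V ≠ 0 → V ≠ ∞ →
      ENNReal.ofReal (p / q) * (ENNReal.ofReal p * V)⁻¹ = (ENNReal.ofReal q * V)⁻¹ := by
    intro p q V hp hq h0 ht
    have hp0 : ENNReal.ofReal p ≠ 0 := by simpa using hp
    rw [ENNReal.ofReal_div_of_pos hq, ENNReal.mul_inv (.inr ht) (.inr h0),
      ENNReal.mul_inv (.inr ht) (.inr h0), div_eq_mul_inv, ← mul_assoc,
      mul_right_comm (ENNReal.ofReal p), ENNReal.mul_inv_cancel hp0 ENNReal.ofReal_ne_top, one_mul]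
  simp only [U, smul_smul]
  rw [volume_annulus hd ha hab.le, volume_annulus hd hb hbc.le,
    volume_annulus hd ha (hab.trans hbc).le, weight hpab hpac hV0 hVt, weight hpbc hpac hV0 hVt,
    ← smul_add, ← annulus_union_annulus d hab.le hbc.le,
    Measure.restrict_union₀ (aedisjoint_annulus hd a b c)
      (measurableSet_annulus d b c).nullMeasurableSet]

/-- Rescaling the two parts of a sum of measures carried by complementary sets: the density is
piecewise constant, which gives the Kullback–Leibler divergence explicitly. -/
theorem klDiv_smul_add_smul {X : Type*} [MeasurableSpace X] {μ ν : Measure X}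
    [IsFiniteMeasure μ] [IsFiniteMeasure ν] {A : Set X} (hA : MeasurableSet A)
    (hμ : μ Aᶜ = 0) (hν : ν A = 0) {r s : ℝ} (hr : 0 ≤ r) (hs : 0 ≤ s) :
    ENNReal.ofReal r • μ + ENNReal.ofReal s • ν ≪ μ + ν ∧
    klDiv (ENNReal.ofReal r • μ + ENNReal.ofReal s • ν) (μ + ν) =
      ((r * μ.real Set.univ * Real.log r + s * ν.real Set.univ * Real.log s : ℝ) : EReal) := by
  classical
  set ρ := ENNReal.ofReal r • μ + ENNReal.ofReal s • ν with hρ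
  let g : X → ℝ≥0∞ := A.piecewise (fun _ => ENNReal.ofReal r) (fun _ => ENNReal.ofReal s)
  have hg : Measurable g := measurable_const.piecewise hA measurable_const
  have hμA : ∀ᵐ x ∂μ, x ∈ A := hμ
  have hνA : ∀ᵐ x ∂ν, x ∉ A := measure_eq_zero_iff_ae_notMem.1 hν
  have hgμ : g =ᵐ[μ] fun _ => ENNReal.ofReal r := by
    filter_upwards [hμA] with x hx using Set.piecewise_eq_of_mem _ _ _ hx
  have hgν : g =ᵐ[ν] fun _ => ENNReal.ofReal s := by
    filter_upwards [hνA] with x hx using Set.piecewise_eq_of_notMem _ _ _ hx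
  have hdens : ρ = (μ + ν).withDensity g := by
    rw [withDensity_add_measure, withDensity_congr_ae hgμ, withDensity_congr_ae hgν,
      withDensity_const, withDensity_const]
  have hac : ρ ≪ μ + ν := hdens ▸ withDensity_absolutelyContinuous _ _
  refine ⟨hac, ?_⟩
  have hrn : ρ.rnDeriv (μ + ν) =ᵐ[ρ] g :=
    hac.ae_le (hdens ▸ Measure.rnDeriv_withDensity (μ + ν) hg)
  have hlogμ : (fun x => Real.log (g x).toReal) =ᵐ[ENNReal.ofReal r • μ] fun _ => Real.log r :=
    Measure.ae_smul_measure (hgμ.mono fun x hx => by simp [hx, hr]) _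
  have hlogν : (fun x => Real.log (g x).toReal) =ᵐ[ENNReal.ofReal s • ν] fun _ => Real.log s :=
    Measure.ae_smul_measure (hgν.mono fun x hx => by simp [hx, hs]) _
  have : IsFiniteMeasure (ENNReal.ofReal r • μ) := μ.smul_finite ENNReal.ofReal_ne_top
  have : IsFiniteMeasure (ENNReal.ofReal s • ν) := ν.smul_finite ENNReal.ofReal_ne_top
  have hint : ∫ x, Real.log (ρ.rnDeriv (μ + ν) x).toReal ∂ρ =
      r * μ.real Set.univ * Real.log r + s * ν.real Set.univ * Real.log s := by
    rw [integral_congr_ae (hrn.mono fun x hx => by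
        rw [hx] : _ =ᵐ[ρ] fun x => Real.log (g x).toReal), hρ,
      integral_add_measure ((integrable_const _).congr hlogμ.symm)
        ((integrable_const _).congr hlogν.symm), integral_congr_ae hlogμ, integral_congr_ae hlogν]
    simp [hr, hs, mul_assoc]
  rw [klDiv, if_pos hac, hint]

/-- `Q₀ ≪ P₀` and the value of `KL(Q₀ ‖ P₀)`. -/
theorem stmt2 (d : ℕ) (hd : 1 ≤ d) (Δ l1 : ℝ) (hΔ : 0 < Δ)
    (hl1 : l1 ∈ Set.Ioo (0:ℝ) 1) :
    Q0 d Δ ≪ P0 d Δ l1 ∧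
    klDiv (Q0 d Δ) (P0 d Δ l1) =
      ((-Real.log (l1 * (1 + Δ) ^ d) / (1 + Δ) ^ d +
        ((1 + Δ) ^ d - 1) / (1 + Δ) ^ d *
          Real.log (((1 + Δ) ^ d - 1) / ((1 - l1) * (1 + Δ) ^ d)) : ℝ) : EReal) := by
  obtain ⟨hl0, hl1⟩ := hl1
  have hd' : d ≠ 0 := by omega
  have hm : 0 < 1 - l1 := by linarith
  have hR : 1 < (1 + Δ) ^ d := one_lt_pow₀ (by linarith) hd'
  have hV0 : volume (Metric.ball (0 : EuclideanSpace ℝ (Fin d)) 1) ≠ 0 :=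
    (Metric.measure_ball_pos _ _ one_pos).ne'
  have hVt : volume (Metric.ball (0 : EuclideanSpace ℝ (Fin d)) 1) ≠ ∞ :=
    measure_ball_lt_top.ne
  have : IsProbabilityMeasure (U d 0 1) := by
    apply isProbabilityMeasure_U <;> rw [volume_annulus hd le_rfl zero_le_one]
    · simpa [hd'] using hV0
    · exact ENNReal.mul_ne_top ENNReal.ofReal_ne_top hVt
  have : IsProbabilityMeasure (U d 1 (1 + Δ)) := by
    apply isProbabilityMeasure_U <;> rw [volume_annulus hd zero_le_one (by linarith)]
    · exact mul_ne_zero (by simpa using hR) hV0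
    · exact ENNReal.mul_ne_top ENNReal.ofReal_ne_top hVt
  have : IsFiniteMeasure (ENNReal.ofReal l1 • U d 0 1) :=
    Measure.smul_finite _ ENNReal.ofReal_ne_top
  have : IsFiniteMeasure (ENNReal.ofReal (1 - l1) • U d 1 (1 + Δ)) :=
    Measure.smul_finite _ ENNReal.ofReal_ne_top
  have hA := measurableSet_annulus d 0 1
  have hμ : (ENNReal.ofReal l1 • U d 0 1) (annulus d 0 1)ᶜ = 0 := by
    simp [U, Measure.restrict_apply hA.compl]
  have hν : (ENNReal.ofReal (1 - l1) • U d 1 (1 + Δ)) (annulus d 0 1) = 0 := by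
    have h : volume (annulus d 0 1 ∩ annulus d 1 (1 + Δ)) = 0 := aedisjoint_annulus hd 0 1 (1 + Δ)
    simp [U, Measure.restrict_apply hA, h]
  have hr : 0 ≤ (l1 * (1 + Δ) ^ d)⁻¹ := by positivity
  have hs : 0 ≤ ((1 + Δ) ^ d - 1) / ((1 - l1) * (1 + Δ) ^ d) :=
    div_nonneg (by linarith) (by positivity)
  have hQ : Q0 d Δ = ENNReal.ofReal (l1 * (1 + Δ) ^ d)⁻¹ • ENNReal.ofReal l1 • U d 0 1 +
      ENNReal.ofReal (((1 + Δ) ^ d - 1) / ((1 - l1) * (1 + Δ) ^ d)) •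
        ENNReal.ofReal (1 - l1) • U d 1 (1 + Δ) := by
    rw [Q0, U_eq_smul_add_smul hd le_rfl one_pos (by linarith), smul_smul, smul_smul,
      ← ENNReal.ofReal_mul hr, ← ENNReal.ofReal_mul hs]
    congr 3 <;> simp only [zero_pow hd', one_pow, sub_zero] <;> field_simp
  have key := klDiv_smul_add_smul hA hμ hν hr hs
  rw [← hQ] at key
  refine ⟨key.1, key.2.trans ?_⟩
  congr 1
  simp only [measureReal_ennreal_smul_apply, probReal_univ, ENNReal.toReal_ofReal hl0.le,
    ENNReal.toReal_ofReal hm.le, Real.log_inv]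
  field_simp
end
end

section
/- Let d ≥ 1, Δ > 0 and λ₁ ∈ (0,1). Then P₀ is absolutely continuous with respect to Q₀ and the Kullback–Leibler divergence satisfies KL(P₀ ‖ Q₀) = λ₁·log(λ₁(1+Δ)^d) + (1−λ₁)·log( (1−λ₁)(1+Δ)^d / ((1+Δ)^d − 1) ). -/
open MeasureTheory ProbabilityTheory
open scoped ENNReal

noncomputable section

/-- Kullback–Leibler divergence of a measure whose density takes the constant values `a` on `A`
and `b` off `A`. -/
theorem klDiv_smul_restrict_add_smul_restrict_compl {X : Type*} [MeasurableSpace X]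
    (ν : Measure X) [IsFiniteMeasure ν] {A : Set X} (hA : MeasurableSet A) {a b : ℝ}
    (ha : 0 ≤ a) (hb : 0 ≤ b) :
    ENNReal.ofReal a • ν.restrict A + ENNReal.ofReal b • ν.restrict Aᶜ ≪ ν ∧
    klDiv (ENNReal.ofReal a • ν.restrict A + ENNReal.ofReal b • ν.restrict Aᶜ) ν =
      ((a * ν.real A * Real.log a + b * ν.real Aᶜ * Real.log b : ℝ) : EReal) := by
  classical
  set g : X → ℝ≥0∞ := A.piecewise (fun _ => ENNReal.ofReal a) (fun _ => ENNReal.ofReal b) with hg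
  have hgm : Measurable g := measurable_const.piecewise hA measurable_const
  set P := ENNReal.ofReal a • ν.restrict A + ENNReal.ofReal b • ν.restrict Aᶜ with hP
  have hPg : P = ν.withDensity g := by
    ext s hs
    rw [withDensity_apply _ hs, ← lintegral_add_compl g hA, Measure.restrict_restrict hA,
      Measure.restrict_restrict hA.compl,
      setLIntegral_congr_fun (hA.inter hs) (g := fun _ => ENNReal.ofReal a)
        (fun x hx => Set.piecewise_eq_of_mem _ _ _ hx.1),
      setLIntegral_congr_fun (hA.compl.inter hs) (g := fun _ => ENNReal.ofReal b)
        (fun x hx => Set.piecewise_eq_of_notMem _ _ _ hx.1)]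
    simp [hP, Measure.restrict_apply hs, Set.inter_comm]
  have hac : P ≪ ν := hPg ▸ withDensity_absolutelyContinuous ν g
  refine ⟨hac, ?_⟩
  have hrn : P.rnDeriv ν =ᵐ[P] g := by
    apply hac.ae_eq
    rw [hPg]
    exact Measure.rnDeriv_withDensity ν hgm
  have hlog : ∀ᵐ x ∂P, Real.log (P.rnDeriv ν x).toReal =
      A.piecewise (fun _ => Real.log a) (fun _ => Real.log b) x := by
    filter_upwards [hrn] with x hx
    rw [hx, hg]
    by_cases h : x ∈ A <;> simp [h, ha, hb]
  have hPA : P.real A = a * ν.real A := by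
    simp [hP, Measure.real, hA, ha]
  have hPAc : P.real Aᶜ = b * ν.real Aᶜ := by
    simp [hP, Measure.real, hb, Measure.restrict_apply hA.compl]
  have : IsFiniteMeasure P := by
    refine ⟨?_⟩
    simp [hP, ENNReal.mul_lt_top]
  rw [klDiv, if_pos hac, integral_congr_ae hlog,
    integral_piecewise hA (integrable_const _).integrableOn (integrable_const _).integrableOn]
  simp [hPA, hPAc]

theorem annulus_zero_left (d : ℕ) (r : ℝ) : annulus d 0 r = Metric.closedBall 0 r := by
  ext x
  simp [annulus]

/-- Up to a null set, removing the closed ball of radius `r` from a larger one leaves the closed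
annulus. -/
theorem compl_closedBall_inter_closedBall_ae_eq_annulus {d : ℕ} (hd : 1 ≤ d) (r R : ℝ) :
    ((Metric.closedBall 0 r)ᶜ ∩ Metric.closedBall 0 R : Set (EuclideanSpace ℝ (Fin d)))
      =ᵐ[volume] annulus d r R := by
  have : NeZero d := ⟨by omega⟩
  have hs : ∀ᵐ x : EuclideanSpace ℝ (Fin d), x ∉ Metric.sphere 0 r :=
    measure_eq_zero_iff_ae_notMem.1 (Measure.addHaar_sphere volume 0 r)
  filter_upwards [hs] with x hx
  apply propext
  change (¬ x ∈ Metric.closedBall 0 r ∧ x ∈ Metric.closedBall 0 R) ↔ r ≤ ‖x‖ ∧ ‖x‖ ≤ R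
  simp only [mem_sphere_zero_iff_norm, mem_closedBall_zero_iff, not_le] at hx ⊢
  exact and_congr_left fun _ => ⟨le_of_lt, fun h => lt_of_le_of_ne h (Ne.symm hx)⟩

theorem Cd_pos (d : ℕ) : 0 < Cd d :=
  ENNReal.toReal_pos (Metric.measure_closedBall_pos volume _ one_pos).ne'
    measure_closedBall_lt_top.ne

theorem volume_closedBall_eq_ofReal (d : ℕ) {r : ℝ} (hr : 0 ≤ r) :
    volume (Metric.closedBall (0 : EuclideanSpace ℝ (Fin d)) r) =
      ENNReal.ofReal (r ^ d * Cd d) := by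
  rw [Measure.addHaar_closedBall' _ _ hr, ENNReal.ofReal_mul (by positivity), Cd,
    ENNReal.ofReal_toReal measure_closedBall_lt_top.ne, finrank_euclideanSpace_fin]

theorem volume_annulus_eq_ofReal {d : ℕ} (hd : 1 ≤ d) {r R : ℝ} (hr : 0 ≤ r) (hrR : r ≤ R) :
    volume (annulus d r R) = ENNReal.ofReal ((R ^ d - r ^ d) * Cd d) := by
  have hC := Cd_pos d
  rw [← measure_congr (compl_closedBall_inter_closedBall_ae_eq_annulus hd r R), Set.inter_comm,
    ← Set.sdiff_eq, measure_sdiff (Metric.closedBall_subset_closedBall hrR)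
      Metric.isClosed_closedBall.measurableSet.nullMeasurableSet measure_closedBall_lt_top.ne,
    volume_closedBall_eq_ofReal d (hr.trans hrR), volume_closedBall_eq_ofReal d hr,
    ← ENNReal.ofReal_sub _ (by positivity), sub_mul]

/-- `P₀` has a density with respect to `Q₀` that is constant on the unit ball and off it. -/
theorem P0_eq_smul_restrict_Q0 {d : ℕ} (hd : 1 ≤ d) {Δ l1 : ℝ} (hΔ : 0 < Δ)
    (hl1 : l1 ∈ Set.Ioo (0:ℝ) 1) :
    P0 d Δ l1 =
      ENNReal.ofReal (l1 * (1 + Δ) ^ d) • (Q0 d Δ).restrict (Metric.closedBall 0 1) +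
      ENNReal.ofReal ((1 - l1) * (1 + Δ) ^ d / ((1 + Δ) ^ d - 1)) •
        (Q0 d Δ).restrict (Metric.closedBall 0 1)ᶜ := by
  obtain ⟨h0, h1⟩ := hl1
  have hC := Cd_pos d
  have hR : 1 < (1 + Δ) ^ d := one_lt_pow₀ (by linarith) (by omega)
  have hR' : 0 < (1 + Δ) ^ d - 1 := by linarith
  have hm : MeasurableSet (Metric.closedBall (0 : EuclideanSpace ℝ (Fin d)) 1) :=
    Metric.isClosed_closedBall.measurableSet
  have hsub : Metric.closedBall (0 : EuclideanSpace ℝ (Fin d)) 1 ⊆ Metric.closedBall 0 (1 + Δ) :=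
    Metric.closedBall_subset_closedBall (by linarith)
  simp only [P0, Q0, U, annulus_zero_left, Measure.restrict_smul, Measure.restrict_restrict hm,
    Measure.restrict_restrict hm.compl, Set.inter_eq_left.2 hsub, smul_smul,
    Measure.restrict_congr_set (compl_closedBall_inter_closedBall_ae_eq_annulus hd 1 (1 + Δ)),
    volume_annulus_eq_ofReal hd zero_le_one (by linarith : 1 ≤ 1 + Δ), one_pow,
    volume_closedBall_eq_ofReal d zero_le_one,
    volume_closedBall_eq_ofReal d (by linarith : 0 ≤ 1 + Δ)]
  rw [← ENNReal.ofReal_inv_of_pos (by positivity), ← ENNReal.ofReal_inv_of_pos (by positivity),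
    ← ENNReal.ofReal_inv_of_pos (by positivity), ← ENNReal.ofReal_mul h0.le,
    ← ENNReal.ofReal_mul (by linarith), ← ENNReal.ofReal_mul (by positivity),
    ← ENNReal.ofReal_mul (div_nonneg (mul_nonneg (by linarith) (by positivity)) hR'.le)]
  congr 3 <;> field_simp

instance isProbabilityMeasure_Q0 (d : ℕ) (Δ : ℝ) [Fact (0 < Δ)] :
    IsProbabilityMeasure (Q0 d Δ) := by
  have hΔ : 0 < Δ := Fact.out
  refine ⟨?_⟩
  simp only [Q0, U, annulus_zero_left, Measure.smul_apply, Measure.restrict_apply_univ,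
    smul_eq_mul]
  exact ENNReal.inv_mul_cancel
    (Metric.measure_closedBall_pos volume _ (by linarith)).ne' measure_closedBall_lt_top.ne

theorem Q0_real_closedBall_one (d : ℕ) {Δ : ℝ} (hΔ : 0 < Δ) :
    (Q0 d Δ).real (Metric.closedBall 0 1) = ((1 + Δ) ^ d)⁻¹ := by
  have hC := Cd_pos d
  have hm : MeasurableSet (Metric.closedBall (0 : EuclideanSpace ℝ (Fin d)) 1) :=
    Metric.isClosed_closedBall.measurableSet
  have hsub : Metric.closedBall (0 : EuclideanSpace ℝ (Fin d)) 1 ⊆ Metric.closedBall 0 (1 + Δ) :=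
    Metric.closedBall_subset_closedBall (by linarith)
  simp only [Measure.real, Q0, U, annulus_zero_left, Measure.smul_apply,
    Measure.restrict_apply hm, Set.inter_eq_left.2 hsub, smul_eq_mul, ENNReal.toReal_mul,
    ENNReal.toReal_inv, volume_closedBall_eq_ofReal d zero_le_one,
    volume_closedBall_eq_ofReal d (by linarith : 0 ≤ 1 + Δ)]
  rw [ENNReal.toReal_ofReal (by positivity), ENNReal.toReal_ofReal (by positivity)]
  field_simp
  simp

/-- `P₀ ≪ Q₀` and the value of `KL(P₀ ‖ Q₀)`. -/
theorem stmt3 (d : ℕ) (hd : 1 ≤ d) (Δ l1 : ℝ) (hΔ : 0 < Δ)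
    (hl1 : l1 ∈ Set.Ioo (0:ℝ) 1) :
    P0 d Δ l1 ≪ Q0 d Δ ∧
    klDiv (P0 d Δ l1) (Q0 d Δ) =
      ((l1 * Real.log (l1 * (1 + Δ) ^ d) +
        (1 - l1) * Real.log ((1 - l1) * (1 + Δ) ^ d / ((1 + Δ) ^ d - 1)) : ℝ) : EReal) := by
  have hR : 1 < (1 + Δ) ^ d := one_lt_pow₀ (by linarith) (by omega)
  have hR' : 0 < (1 + Δ) ^ d - 1 := by linarith
  have hl : 0 ≤ 1 - l1 := by linarith [hl1.2]
  have hm : MeasurableSet (Metric.closedBall (0 : EuclideanSpace ℝ (Fin d)) 1) :=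
    Metric.isClosed_closedBall.measurableSet
  have : Fact (0 < Δ) := ⟨hΔ⟩
  have key := klDiv_smul_restrict_add_smul_restrict_compl (Q0 d Δ) hm
    (mul_nonneg hl1.1.le (by positivity : 0 ≤ (1 + Δ) ^ d))
    (div_nonneg (mul_nonneg hl (by positivity : 0 ≤ (1 + Δ) ^ d)) hR'.le)
  rw [← P0_eq_smul_restrict_Q0 hd hΔ hl1, probReal_compl_eq_one_sub hm,
    Q0_real_closedBall_one d hΔ] at key
  refine ⟨key.1, key.2.trans ?_⟩
  congr 3 <;> field_simp
end
end

section
/- Let a > 1 be a real number and let λ₁ ∈ ℝ satisfy 1/a < λ₁ < 1. Then −log(λ₁ a)/a + ((a−1)/a)·log( (a−1) / ((1−λ₁)a) ) ≤ log( 1/(1−λ₁) ). -/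
open MeasureTheory ProbabilityTheory
open scoped ENNReal

noncomputable section

/-- real-number bound used to control `KL(Q₀ ‖ P₀)`, with `a = (1+Δ)^d`. -/
theorem stmt7 (a l1 : ℝ) (ha : 1 < a) (h1 : 1 / a < l1) (h2 : l1 < 1) :
    -Real.log (l1 * a) / a + (a - 1) / a * Real.log ((a - 1) / ((1 - l1) * a)) ≤
      Real.log (1 / (1 - l1)) := by
  have ha0 : 0 < a := by linarith
  have hl : 0 < 1 - l1 := by linarith
  have hla : 1 < l1 * a := (div_lt_iff₀ ha0).1 h1
  have hfirst : -Real.log (l1 * a) / a ≤ 0 :=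
    div_nonpos_of_nonpos_of_nonneg (neg_nonpos.2 (Real.log_nonneg hla.le)) ha0.le
  have hone : 1 ≤ (a - 1) / ((1 - l1) * a) := by
    rw [le_div_iff₀ (by positivity)]
    linarith
  have hcoef : (a - 1) / a ≤ 1 := by
    rw [div_le_one ha0]
    linarith
  have harg : (a - 1) / ((1 - l1) * a) ≤ 1 / (1 - l1) := by
    rw [mul_comm, ← div_div]
    gcongr
  have hlog := Real.log_le_log (by linarith) harg
  linarith [mul_le_of_le_one_left (Real.log_nonneg hone) hcoef]
end
end
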